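/- Let M be a d×n integer matrix of rank r all of whose r×r minors lie in {-1,0,1} (a unimodular matrix), let L = M·Mᵀ, and let L̄ be a d×r matrix whose columns are r linearly independent columns of L (equivalently, a basis of the ℤ-span of the columns of L chosen from among the columns of L). Then the r-dimensional Hausdorff measure of the zonotope Z(M) equals the r-dimensional Hausdorff measure of the parallelepiped Z(L̄). (Both sets lie in the r-dimensional column space of M in ℝ^d.) -/

import Mathlib

open MeasureTheory

/-- The zonotope generated by a `d × k` real matrix, viewed inside Euclidean
space `ℝ^d` (so that Hausdorff measures are taken w.r.t. the Euclidean
metric): the image of the unit cube `[0,1]^k` under `x ↦ M x`. -/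
def zonotopeE {d k : ℕ} (M : Matrix (Fin d) (Fin k) ℝ) : Set (EuclideanSpace ℝ (Fin d)) :=
  {y | ∃ x : Fin k → ℝ, (∀ i, x i ∈ Set.Icc (0 : ℝ) 1) ∧
    y = (WithLp.equiv 2 (Fin d → ℝ)).symm (M.mulVec x)}

lemma vol_fubini {r : ℕ} (K : Set (Fin (r+1) → ℝ)) (hK : MeasurableSet K) :
    volume K = ∫⁻ y : Fin r → ℝ, volume {t : ℝ | (Fin.cons t y : Fin (r+1) → ℝ) ∈ K} := by
  have h := (volume_preserving_piFinSuccAbove (fun _ : Fin (r+1) => ℝ) 0).symm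
  rw [← h.measure_preimage_equiv K]
  rw [Measure.volume_eq_prod, Measure.prod_apply_symm]
  · refine lintegral_congr fun y => ?_
    congr 1
    ext t
    have e : (MeasurableEquiv.piFinSuccAbove (fun _ : Fin (r+1) => ℝ) 0).symm (t, y)
        = (Fin.cons t y : Fin (r+1) → ℝ) := by
      ext i
      refine Fin.cases ?_ (fun j => ?_) i <;>
        simp [MeasurableEquiv.piFinSuccAbove, Fin.insertNthEquiv]
    change (MeasurableEquiv.piFinSuccAbove (fun _ : Fin (r+1) => ℝ) 0).symm (t, y) ∈ K ↔ _
    rw [e]; rfl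
  · exact (MeasurableEquiv.measurable _) hK

lemma fiber_vol (S : Set ℝ) (hc : IsCompact S) (hv : Convex ℝ S) (hne : S.Nonempty) :
    volume {t : ℝ | ∃ s ∈ Set.Icc (0:ℝ) 1, t - s ∈ S} = volume S + 1 := by
  have h := eq_Icc_of_connected_compact (hv.isConnected hne) hc
  generalize sInf S = a at h
  generalize sSup S = b at h
  have hab : a ≤ b := by rw [h] at hne; exact Set.nonempty_Icc.1 hne
  have : {t : ℝ | ∃ s ∈ Set.Icc (0:ℝ) 1, t - s ∈ S} = Set.Icc a (b+1) := by
    ext t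
    simp only [h, Set.mem_ofPred_eq, Set.mem_Icc]
    constructor
    · rintro ⟨s, hs, h1⟩; constructor <;> linarith
    · rintro ⟨h1, h2⟩
      by_cases h3 : t ≤ b
      · exact ⟨0, by norm_num, by constructor <;> linarith⟩
      · push Not at h3
        exact ⟨t - b, by constructor <;> linarith, by constructor <;> linarith⟩
  rw [this, h, Real.volume_Icc, Real.volume_Icc, ← ENNReal.ofReal_one, ← ENNReal.ofReal_add] <;> 
    [congr 1; skip; skip] <;> linarith

lemma vol_add {r : ℕ} (K K' : Set (Fin (r+1) → ℝ)) (hc : IsCompact K) (hv : Convex ℝ K)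
    (hm : MeasurableSet K')
    (hK' : ∀ (t : ℝ) (y : Fin r → ℝ), (Fin.cons t y : Fin (r+1) → ℝ) ∈ K' ↔
      ∃ s ∈ Set.Icc (0:ℝ) 1, (Fin.cons (t - s) y : Fin (r+1) → ℝ) ∈ K) :
    volume K' = volume K + volume ((fun z : Fin (r+1) → ℝ => fun i : Fin r => z i.succ) '' K) := by
  have hP : MeasurableSet ((fun z : Fin (r+1) → ℝ => fun i : Fin r => z i.succ) '' K) :=
    (hc.image (by fun_prop)).measurableSet
  set P := ((fun z : Fin (r+1) → ℝ => fun i : Fin r => z i.succ) '' K) with hPdef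
  rw [vol_fubini K' hm, vol_fubini K hc.measurableSet, ← lintegral_indicator_one hP,
    ← lintegral_add_right _ (measurable_one.indicator hP)]
  refine lintegral_congr fun y => ?_
  have hmem : y ∈ P ↔ {t : ℝ | (Fin.cons t y : Fin (r+1) → ℝ) ∈ K}.Nonempty := by
    constructor
    · rintro ⟨z, hz, rfl⟩
      refine ⟨z 0, ?_⟩
      have : (Fin.cons (z 0) (fun i : Fin r => z i.succ) : Fin (r+1) → ℝ) = z := Fin.cons_self_tail z
      simpa [this] using hz
    · rintro ⟨t, ht⟩
      exact ⟨_, ht, by ext i; simp⟩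
  have e : {t : ℝ | (Fin.cons t y : Fin (r+1) → ℝ) ∈ K'} =
      {t : ℝ | ∃ s ∈ Set.Icc (0:ℝ) 1, t - s ∈ {t : ℝ | (Fin.cons t y : Fin (r+1) → ℝ) ∈ K}} := by
    ext t; simp [hK']
  rw [e]
  by_cases hy : y ∈ P
  · rw [fiber_vol _ _ _ (hmem.1 hy)]
    · simp [hy]
    · have hcl : IsClosed {t : ℝ | (Fin.cons t y : Fin (r+1) → ℝ) ∈ K} := by
        refine hc.isClosed.preimage (continuous_pi fun i => ?_)
        refine Fin.cases ?_ (fun j => ?_) i <;> simp <;> fun_prop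
      refine (hc.image (continuous_apply (0 : Fin (r+1)))).of_isClosed_subset hcl ?_
      intro t ht
      exact ⟨_, ht, by simp⟩
    · intro t ht u hu a b ha hb hab
      have := hv ht hu ha hb hab
      change (Fin.cons (a • t + b • u) y : Fin (r+1) → ℝ) ∈ K
      have e : (Fin.cons (a • t + b • u) y : Fin (r+1) → ℝ) =
          a • (Fin.cons t y : Fin (r+1) → ℝ) + b • (Fin.cons u y : Fin (r+1) → ℝ) := ?_
      · rw [e]; exact this
      ext i
      refine Fin.cases ?_ (fun j => ?_) i
      · simp
      · simp [← add_mul, hab]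
  · have : {t : ℝ | (Fin.cons t y : Fin (r+1) → ℝ) ∈ K} = ∅ := by
      rwa [← Set.not_nonempty_iff_eq_empty, ← hmem]
    simp [this, hy]

/-- Plain zonotope. -/
def zonP {r n : ℕ} (N : Matrix (Fin r) (Fin n) ℝ) : Set (Fin r → ℝ) :=
  N.mulVec '' Set.Icc 0 1

lemma zonP_compact {r n : ℕ} (N : Matrix (Fin r) (Fin n) ℝ) : IsCompact (zonP N) :=
  isCompact_Icc.image (by fun_prop)

lemma zonP_convex {r n : ℕ} (N : Matrix (Fin r) (Fin n) ℝ) : Convex ℝ (zonP N) :=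
  (convex_Icc (0 : Fin n → ℝ) 1).linear_image N.mulVecLin

lemma zonP_mul {r s n : ℕ} (B : Matrix (Fin s) (Fin r) ℝ) (N : Matrix (Fin r) (Fin n) ℝ) :
    zonP (B * N) = B.mulVec '' zonP N := by
  simp [zonP, Set.image_image, Matrix.mulVec_mulVec]

lemma vol_mul {r n : ℕ} (B : Matrix (Fin r) (Fin r) ℝ) (N : Matrix (Fin r) (Fin n) ℝ) :
    volume (zonP (B * N)) = ENNReal.ofReal |B.det| * volume (zonP N) := by
  rw [zonP_mul]
  have := Measure.addHaar_image_linearMap volume (Matrix.toLin' B) (zonP N)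
  rw [LinearMap.det_toLin'] at this
  exact this

lemma vol_sq {r : ℕ} (B : Matrix (Fin r) (Fin r) ℝ) :
    volume (zonP B) = ENNReal.ofReal |B.det| := by
  have := vol_mul B (1 : Matrix (Fin r) (Fin r) ℝ)
  rw [mul_one] at this
  rw [this]
  simp [zonP, Real.volume_Icc_pi]

lemma det_nn {r n : ℕ} (N : Matrix (Fin r) (Fin n) ℝ) : 0 ≤ (N * N.transpose).det := by
  have := (Matrix.posSemidef_self_mul_conjTranspose N).det_nonneg
  simpa using this

/-- membership in terms of the first column -/
lemma zonP_succ {r n : ℕ} (N : Matrix (Fin r) (Fin (n+1)) ℝ) (z : Fin r → ℝ) :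
    z ∈ zonP N ↔ ∃ s ∈ Set.Icc (0:ℝ) 1, z - s • (fun i => N i 0) ∈ zonP (N.submatrix id Fin.succ) := by
  constructor
  · rintro ⟨x, hx, rfl⟩
    refine ⟨x 0, ⟨hx.1 0, hx.2 0⟩, fun i => x i.succ, ⟨fun i => hx.1 _, fun i => hx.2 _⟩, ?_⟩
    ext i
    simp [Matrix.mulVec, dotProduct, Fin.sum_univ_succ, mul_comm]
  · rintro ⟨s, hs, x, hx, h⟩
    refine ⟨Fin.cons s x, ⟨?_, ?_⟩, ?_⟩
    · intro i; refine Fin.cases ?_ (fun j => ?_) i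
      · simpa using hs.1
      · simpa using hx.1 j
    · intro i; refine Fin.cases ?_ (fun j => ?_) i
      · simpa using hs.2
      · simpa using hx.2 j
    · ext i
      have := congrFun h i
      simp [Matrix.mulVec, dotProduct, Fin.sum_univ_succ] at this ⊢
      rw [this]; ring

lemma zonP_drop {r n : ℕ} (N : Matrix (Fin (r+1)) (Fin n) ℝ) :
    (fun z : Fin (r+1) → ℝ => fun i : Fin r => z i.succ) '' zonP N
      = zonP (N.submatrix Fin.succ id) := by
  simp only [zonP, Set.image_image]
  rfl

lemma gram_succ {r n : ℕ} (N : Matrix (Fin r) (Fin (n+1)) ℝ) (i j : Fin r) :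
    (N * N.transpose) i j = N i 0 * N j 0 +
      ((N.submatrix id Fin.succ) * (N.submatrix id Fin.succ).transpose) i j := by
  simp [Matrix.mul_apply, Fin.sum_univ_succ]

lemma det_rec {r n : ℕ} (N : Matrix (Fin (r+1)) (Fin (n+1)) ℝ)
    (h0 : ∀ i, N i 0 = (Pi.single 0 1 : Fin (r+1) → ℝ) i) :
    (N * N.transpose).det =
      ((N.submatrix id Fin.succ) * (N.submatrix id Fin.succ).transpose).det +
      ((N.submatrix Fin.succ Fin.succ) * (N.submatrix Fin.succ Fin.succ).transpose).det := by
  set A := (N.submatrix id Fin.succ) * (N.submatrix id Fin.succ).transpose with hA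
  have e : N * N.transpose = A.updateRow 0 (A 0 + Pi.single 0 1) := by
    ext i j
    rw [gram_succ, ← hA, h0, h0]
    refine Fin.cases ?_ (fun k => ?_) i
    · simp [add_comm]
    · simp [Matrix.updateRow_apply]
  rw [e, Matrix.det_updateRow_add, Matrix.updateRow_eq_self]
  congr 1
  rw [Matrix.det_succ_row_zero, Finset.sum_eq_single 0]
  · simp
    congr 1
  · intro j _ hj
    simp [hj]
  · simp

theorem main_vol (n : ℕ) : ∀ (r : ℕ) (N : Matrix (Fin r) (Fin n) ℝ) (c : ℝ), 
    (∀ g : Fin r → Fin n, |(N.submatrix id g).det| = 0 ∨ |(N.submatrix id g).det| = c) →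
    volume (zonP N) * ENNReal.ofReal c = ENNReal.ofReal (N * N.transpose).det := by
  induction n with
  | zero =>
    intro r N c h
    have hz : N * N.transpose = 0 := by ext i j; simp [Matrix.mul_apply]
    rcases r with _ | r
    · have h1 := h Fin.elim0
      simp at h1
      subst h1
      have : zonP N = Set.univ := by
        apply Set.eq_univ_of_forall
        intro x
        exact ⟨0, ⟨le_rfl, by simp⟩, Subsingleton.elim _ _⟩
      have hI : (Set.univ : Set (Fin 0 → ℝ)) = Set.Icc 0 1 := by
        ext x; simp [Subsingleton.elim x 0]
      rw [this, hI, Real.volume_Icc_pi]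
      simp
    · have : (zonP N).Subsingleton := by
        rintro _ ⟨x, hx, rfl⟩ _ ⟨y, hy, rfl⟩
        rw [Subsingleton.elim x y]
      rw [hz, this.measure_zero]
      simp [Matrix.det_zero]
  | succ n ih =>
    intro r N c h
    by_cases hv : (fun i => N i 0) = 0
    · have e1 : zonP N = zonP (N.submatrix id Fin.succ) := by
        ext z
        rw [zonP_succ, hv]
        simp only [smul_zero, sub_zero]
        exact ⟨fun ⟨_, _, h⟩ => h, fun h => ⟨0, by norm_num, h⟩⟩
      have e2 : N * N.transpose =
          ((N.submatrix id Fin.succ) * (N.submatrix id Fin.succ).transpose) := by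
        ext i j
        have := congrFun hv i
        simp at this
        rw [gram_succ, this]; simp
      rw [e1, e2]
      exact ih r _ c fun g => h (Fin.succ ∘ g)
    · rcases r with _ | r
      · exact absurd (Subsingleton.elim _ _) hv
      -- the normalized case
      have key : ∀ (N : Matrix (Fin (r+1)) (Fin (n+1)) ℝ) (c : ℝ),
          (∀ g : Fin (r+1) → Fin (n+1), |(N.submatrix id g).det| = 0 ∨
            |(N.submatrix id g).det| = c) →
          (∀ i, N i 0 = (Pi.single 0 1 : Fin (r+1) → ℝ) i) →
          volume (zonP N) * ENNReal.ofReal c = ENNReal.ofReal (N * N.transpose).det := by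
        intro N c h h0
        rw [det_rec N h0, ENNReal.ofReal_add (det_nn _) (det_nn _)]
        rw [← ih (r+1) (N.submatrix id Fin.succ) c fun g => h (Fin.succ ∘ g)]
        rw [← ih r (N.submatrix Fin.succ Fin.succ) c ?_]
        · rw [← add_mul]
          congr 1
          rw [vol_add (zonP (N.submatrix id Fin.succ)) (zonP N) (zonP_compact _) (zonP_convex _)
            (zonP_compact _).measurableSet, zonP_drop]
          · rfl
          · intro t y
            rw [zonP_succ]
            have : ∀ s : ℝ, (Fin.cons t y : Fin (r+1) → ℝ) - s • (fun i => N i 0) = 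
                (Fin.cons (t - s) y : Fin (r+1) → ℝ) := by
              intro s
              ext i
              refine Fin.cases ?_ (fun j => ?_) i
              · simp [h0]
              · simp [h0]
            simp only [this]
        · intro g
          have := h (Fin.cons 0 (Fin.succ ∘ g))
          have e : (N.submatrix id (Fin.cons 0 (Fin.succ ∘ g) : Fin (r+1) → Fin (n+1))).det =
              ((N.submatrix Fin.succ Fin.succ).submatrix id g).det := by
            rw [Matrix.det_succ_column_zero, Finset.sum_eq_single 0]
            · simp [h0]
            · intro j _ hj
              simp [h0, hj]
            · simp
          rwa [e] at this
      obtain ⟨A, hA⟩ := SeparatingDual.exists_continuousLinearEquiv_apply_eq (R := ℝ) hv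
        (y := (Pi.single 0 1 : Fin (r+1) → ℝ)) (by simp)
      set B := LinearMap.toMatrix' (A.toLinearEquiv : (Fin (r+1) → ℝ) →ₗ[ℝ] (Fin (r+1) → ℝ)) with hB
      have hdet : B.det ≠ 0 := by
        rw [hB, LinearMap.det_toMatrix']
        exact (LinearEquiv.isUnit_det' A.toLinearEquiv).ne_zero
      have k := key (B * N) (|B.det| * c) ?_ ?_
      · rw [vol_mul, Matrix.transpose_mul, ENNReal.ofReal_mul (abs_nonneg _)] at k
        have e : B * N * (N.transpose * B.transpose) = B * (N * N.transpose) * B.transpose := by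
          simp only [Matrix.mul_assoc]
        rw [e, Matrix.det_mul, Matrix.det_mul, Matrix.det_transpose] at k
        have e2 : B.det * (N * N.transpose).det * B.det = 
            (|B.det| * |B.det|) * (N * N.transpose).det := by
          rw [abs_mul_abs_self]; ring
        rw [e2, ENNReal.ofReal_mul (by positivity), ENNReal.ofReal_mul (by positivity)] at k
        have hp : ENNReal.ofReal |B.det| ≠ 0 := by simpa using hdet
        have ht : ENNReal.ofReal |B.det| ≠ ⊤ := ENNReal.ofReal_ne_top
        rw [← ENNReal.mul_right_inj hp ht, ← ENNReal.mul_right_inj hp ht, ← mul_assoc (ENNReal.ofReal |B.det|) (ENNReal.ofReal |B.det|) (ENNReal.ofReal (N * N.transpose).det), ← k]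
        ring
      · intro g
        have : (B * N).submatrix id g = B * N.submatrix id g := by
          ext i j; simp [Matrix.mul_apply]
        rw [this, Matrix.det_mul, abs_mul]
        rcases h g with h | h
        · left; rw [h, mul_zero]
        · right; rw [h]
      · intro i
        have := congrFun hA i
        rw [← this]
        have h2 : B.mulVec (fun i => N i 0) = A (fun i => N i 0) := by
          rw [hB, LinearMap.toMatrix'_mulVec]; rfl
        rw [← h2]; rfl

lemma haus_const {d r : ℕ} (F : Matrix (Fin d) (Fin r) ℝ) (hF : Function.Injective F.mulVec) :
    ∃ κ : ENNReal, ∀ S : Set (Fin r → ℝ),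
      μH[(r : ℝ)] ((fun x => (WithLp.equiv 2 (Fin d → ℝ)).symm (F.mulVec x)) '' S) 
        = κ * volume S := by
  let f : (Fin r → ℝ) →ₗ[ℝ] EuclideanSpace ℝ (Fin d) :=
    (WithLp.linearEquiv 2 ℝ (Fin d → ℝ)).symm.toLinearMap ∘ₗ F.mulVecLin
  have hf : Function.Injective f := fun x y h => hF ((WithLp.linearEquiv 2 ℝ (Fin d → ℝ)).symm.injective h)
  change ∃ κ : ENNReal, ∀ S : Set (Fin r → ℝ), μH[(r : ℝ)] (f '' S) = κ * volume S
  have hemb : MeasurableEmbedding f :=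
    (LinearMap.isClosedEmbedding_of_injective (LinearMap.ker_eq_bot.2 hf)).measurableEmbedding
  let ν : Measure (Fin r → ℝ) := Measure.comap f μH[(r:ℝ)]
  have hν : ∀ S, ν S = μH[(r:ℝ)] (f '' S) := fun S => hemb.comap_apply _ S
  have i1 : IsFiniteMeasureOnCompacts ν := by
    constructor
    intro K hK
    rw [hν]
    have hl := (LinearMap.toContinuousLinearMap f).lipschitz
    refine (hl.hausdorffMeasure_image_le (d := (r:ℝ)) (by positivity) K).trans_lt ?_
    have := hausdorffMeasure_pi_real (ι := Fin r)
    rw [Fintype.card_fin] at this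
    rw [this]
    exact ENNReal.mul_lt_top (ENNReal.rpow_lt_top_of_nonneg (by positivity) (by simp)) hK.measure_lt_top
  have i2 : ν.IsAddLeftInvariant := by
    constructor
    intro v
    ext S hS
    rw [Measure.map_apply (by fun_prop) hS, hν, hν]
    have : f '' S = (fun y => f v + y) '' (f '' ((fun x => v + x) ⁻¹' S)) := by
      ext y
      constructor
      · rintro ⟨x, hx, rfl⟩
        exact ⟨f (x - v), ⟨x - v, by simpa using hx, rfl⟩, by simp⟩
      · rintro ⟨_, ⟨x, hx, rfl⟩, rfl⟩
        exact ⟨v + x, hx, by simp⟩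
    rw [this, (isometry_add_left (f v)).hausdorffMeasure_image (Or.inl (by positivity))]
  refine ⟨(ν.addHaarScalarFactor volume : NNReal), fun S => ?_⟩
  rw [← hν]
  conv_lhs => rw [Measure.isAddLeftInvariant_eq_smul ν volume]
  rfl

lemma zonE_mul {d r n : ℕ} (F : Matrix (Fin d) (Fin r) ℝ) (N : Matrix (Fin r) (Fin n) ℝ) :
    zonotopeE (F * N) =
      (fun x => (WithLp.equiv 2 (Fin d → ℝ)).symm (F.mulVec x)) '' zonP N := by
  ext y
  constructor
  · rintro ⟨x, hx, rfl⟩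
    exact ⟨_, ⟨x, ⟨fun i => (hx i).1, fun i => (hx i).2⟩, rfl⟩, by simp [Matrix.mulVec_mulVec]⟩
  · rintro ⟨_, ⟨x, hx, rfl⟩, rfl⟩
    exact ⟨x, fun i => ⟨hx.1 i, hx.2 i⟩, by simp [Matrix.mulVec_mulVec]⟩

theorem stmt12 (d n r : ℕ) (M : Matrix (Fin d) (Fin n) ℝ)
    (hint : ∀ i j, ∃ z : ℤ, M i j = (z : ℝ))
    (hrank : M.rank = r)
    (huni : ∀ (f : Fin r → Fin d) (g : Fin r → Fin n),
      Function.Injective f → Function.Injective g →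
      (M.submatrix f g).det ∈ ({-1, 0, 1} : Set ℝ))
    (L : Matrix (Fin d) (Fin d) ℝ) (hLdef : L = M * M.transpose)
    (g : Fin r → Fin d) (hg : Function.Injective g)
    (hind : LinearIndependent ℝ (fun j : Fin r => fun i => L i (g j))) :
    μH[(r : ℝ)] (zonotopeE M) = μH[(r : ℝ)] (zonotopeE (L.submatrix id g)) := by
  set N : Matrix (Fin r) (Fin n) ℝ := M.submatrix g id with hN
  have hL : L.submatrix id g = M * N.transpose := by
    rw [hLdef]; ext i j; simp [Matrix.mul_apply, hN]
  have hLinj : Function.Injective (M * N.transpose).mulVec := by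
    rw [← hL, Matrix.mulVec_injective_iff]
    exact hind
  have hNind : LinearIndependent ℝ N.row := by
    rw [← Matrix.col_transpose, ← Matrix.mulVec_injective_iff]
    intro x y hxy
    apply hLinj
    simp only [← Matrix.mulVec_mulVec]
    rw [hxy]
  have hspan : Submodule.span ℝ (Set.range N.row) = Submodule.span ℝ (Set.range M.row) := by
    apply Submodule.eq_of_le_of_finrank_eq
    · apply Submodule.span_mono
      rintro _ ⟨j, rfl⟩
      exact ⟨g j, rfl⟩
    · rw [finrank_span_eq_card hNind, ← Matrix.rank_eq_finrank_span_row, hrank, Fintype.card_fin]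
  have hex : ∀ i, ∃ c : Fin r → ℝ, ∑ j, c j • N.row j = M.row i := by
    intro i
    rw [← Submodule.mem_span_range_iff_exists_fun, hspan]
    exact Submodule.subset_span ⟨i, rfl⟩
  choose F hF using hex
  have hMF : M = Matrix.of F * N := by
    ext i j
    have := congrFun (hF i) j
    simp [Finset.sum_apply] at this
    simp [Matrix.mul_apply, this]
  set F' := Matrix.of F
  have hLF : L.submatrix id g = F' * (N * N.transpose) := by
    rw [hL, ← Matrix.mul_assoc, ← hMF]
  have hcomp : (M * N.transpose).mulVec = F'.mulVec ∘ (N * N.transpose).mulVec := by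
    ext x : 1
    rw [← hL, hLF]; simp only [Function.comp, Matrix.mulVec_mulVec]
  have hFinj : Function.Injective F'.mulVec := by
    rw [hcomp] at hLinj
    have h1 : Function.Injective (N * N.transpose).mulVecLin := hLinj.of_comp
    have h2 : Function.Surjective (N * N.transpose).mulVec :=
      LinearMap.injective_iff_surjective.1 h1
    intro x y hxy
    obtain ⟨x, rfl⟩ := h2 x
    obtain ⟨y, rfl⟩ := h2 y
    rw [hLinj hxy]
  obtain ⟨κ, hκ⟩ := haus_const F' hFinj
  rw [hLF, zonE_mul, hκ, vol_sq, abs_of_nonneg (det_nn N)]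
  conv_lhs => rw [hMF, zonE_mul, hκ]
  have := main_vol n r N 1 ?_
  · rw [← this]; simp
  · intro h
    by_cases hh : Function.Injective h
    · have := huni g h hg hh
      have e : N.submatrix id h = M.submatrix g h := rfl
      rw [e]
      rcases this with h | h | h
      · right; rw [h]; norm_num
      · left; rw [h]; norm_num
      · right; rw [h]; norm_num
    · left
      simp only [Function.Injective, not_forall] at hh
      obtain ⟨a, b, hab, hne⟩ := hh
      rw [Matrix.det_zero_of_column_eq hne, abs_zero]
      intro k; simp [hab]
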